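/- Uniqueness of bounded weak solutions to the degenerate parabolic equation ∂_t ρ = ∇·(𝒜∇φ(ρ)) on the torus U^d = [−1,1]^d with periodic boundary conditions: if φ : [0,∞) → [0,∞) is Lipschitz and non-decreasing with φ(0) = 0, and 𝒜 is a constant symmetric matrix with ε₀|ξ|² ≤ ξ·𝒜ξ ≤ ε₀⁻¹|ξ|², then two bounded weak solutions (in the sense of the integral identity against C^{1,2} test functions) with the same bounded initial profile ρ₀ coincide almost everywhere on [0,T]×U^d. -/

import Mathlib

open MeasureTheory

namespace WeakSolUniq

variable (dd : ℕ)

/-- the box `U^d = [−1,1]^d` -/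
def Box (dd : ℕ) : Set (Fin dd → ℝ) := Set.univ.pi fun _ => Set.Icc (-1 : ℝ) 1

/-- periodicity with period `2` in each coordinate -/
def SpacePeriodic {dd : ℕ} (f : (Fin dd → ℝ) → ℝ) : Prop :=
  ∀ (u : Fin dd → ℝ) (k : Fin dd → ℤ), f (fun i => u i + 2 * (k i : ℝ)) = f u

/-- `∇·𝒜∇G(u) = ∑_{i,j} 𝒜_{ij} ∂_i ∂_j G(u)` for a constant matrix `𝒜` -/
noncomputable def divAGrad {dd : ℕ} (𝒜 : Matrix (Fin dd) (Fin dd) ℝ)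
    (G : (Fin dd → ℝ) → ℝ) (u : Fin dd → ℝ) : ℝ :=
  ∑ i, ∑ j, 𝒜 i j *
    fderiv ℝ (fun v => fderiv ℝ G v (Pi.single j (1 : ℝ))) u (Pi.single i (1 : ℝ))

/-- bounded weak solution of `∂_t ρ = ∇·(𝒜∇φ(ρ))` on the torus, tested against
periodic test functions `G` of class `C^{1,2}` (we take jointly `C²`): for all
such `G`, `∫₀^T∫ [ρ ∂_s G + φ(ρ) ∇·𝒜∇G] du ds + ∫ ρ₀ G(0,·) = ∫ ρ(T,·) G(T,·)`. -/
def IsWeakSolution {dd : ℕ} (T : ℝ) (𝒜 : Matrix (Fin dd) (Fin dd) ℝ)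
    (φ : ℝ → ℝ) (ρ₀ : (Fin dd → ℝ) → ℝ) (ρ : ℝ → (Fin dd → ℝ) → ℝ) : Prop :=
  Measurable (fun p : ℝ × (Fin dd → ℝ) => ρ p.1 p.2) ∧
  (∃ Mb : ℝ, ∀ t u, |ρ t u| ≤ Mb) ∧
  (∀ t, SpacePeriodic (ρ t)) ∧
  ∀ G : ℝ → (Fin dd → ℝ) → ℝ,
    ContDiff ℝ 2 (fun p : ℝ × (Fin dd → ℝ) => G p.1 p.2) →
    (∀ t, SpacePeriodic (G t)) →
    (∫ s in Set.Icc (0 : ℝ) T, ∫ u in Box dd,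
        (ρ s u * deriv (fun r => G r u) s + φ (ρ s u) * divAGrad 𝒜 (G s) u))
      + ∫ u in Box dd, ρ₀ u * G 0 u
      = ∫ u in Box dd, ρ T u * G T u

end WeakSolUniq

open WeakSolUniq


theorem time_rep (T lam : ℝ) (hT : 0 < T) (W V : ℝ → ℝ)
    (hW : Measurable W) (hV : Measurable V) (B : ℝ) (hWB : ∀ t, |W t| ≤ B) (hVB : ∀ t, |V t| ≤ B)
    (h : ∀ a : ℝ → ℝ, ContDiff ℝ 2 a → a T = 0 →
      ∫ s in Set.Icc 0 T, (W s * deriv a s - lam * V s * a s) = 0) :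
    ∀ᵐ t ∂(volume.restrict (Set.Icc 0 T)), W t = - lam * ∫ s in (0:ℝ)..t, V s := by
  have hWi : ∀ a b, IntervalIntegrable W volume a b := fun a b =>
    (intervalIntegrable_const (c := B)).mono_fun' hW.aestronglyMeasurable
      (Filter.Eventually.of_forall hWB)
  have hVi : ∀ a b, IntervalIntegrable V volume a b := fun a b =>
    (intervalIntegrable_const (c := B)).mono_fun' hV.aestronglyMeasurable
      (Filter.Eventually.of_forall hVB)
  set F : ℝ → ℝ := fun t => ∫ s in (0:ℝ)..t, V s with hF
  have hFc : Continuous F := intervalIntegral.continuous_primitive hVi 0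
  have hFac : AbsolutelyContinuousOnInterval F 0 T :=
    (hVi 0 T).absolutelyContinuousOnInterval_intervalIntegral (by simp)
  have hFd : ∀ᵐ x ∂volume, x ∈ Set.uIcc 0 T → HasDerivAt F (V x) x := by
    exact (hVi 0 T).ae_hasDerivAt_integral.mono (fun x hx hx' => hx hx' 0 (by simp))
  have key : ∀ b : ℝ → ℝ, ContDiff ℝ ((⊤ : ℕ∞) : WithTop ℕ∞) b → ∫ s in (0:ℝ)..T, b s * (W s + lam * F s) = 0 := by
    intro b hb
    have hbc := hb.continuous
    set a : ℝ → ℝ := fun t => ∫ s in T..t, b s with ha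
    have had : ∀ t, HasDerivAt a (b t) t := fun t =>
      intervalIntegral.integral_hasDerivAt_right (hbc.intervalIntegrable _ _)
        hbc.stronglyMeasurable.stronglyMeasurableAtFilter hbc.continuousAt
    have hda : deriv a = b := funext fun t => (had t).deriv
    have hac : ContDiff ℝ 2 a := by
      rw [show (2 : WithTop ℕ∞) = 1 + 1 by norm_num, contDiff_succ_iff_deriv]
      refine ⟨fun t => (had t).differentiableAt, by simp, ?_⟩
      rw [hda]; exact hb.of_le (by exact_mod_cast le_top)
    have haT : a T = 0 := by simp [ha]
    have h1 := h a hac haT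
    rw [integral_Icc_eq_integral_Ioc, ← intervalIntegral.integral_of_le hT.le, hda] at h1
    have hacc : Continuous a := hac.continuous
    have haac : AbsolutelyContinuousOnInterval a 0 T :=
      ContDiffOn.absolutelyContinuousOnInterval (hac.of_le (by norm_num)).contDiffOn
    have ibp := hFac.integral_mul_deriv_eq_deriv_mul haac
    rw [hda, haT] at ibp
    have hF0 : F 0 = 0 := by simp [hF]
    rw [hF0] at ibp
    have hcongr : ∫ x in (0:ℝ)..T, deriv F x * a x = ∫ x in (0:ℝ)..T, V x * a x := by
      apply intervalIntegral.integral_congr_ae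
      filter_upwards [hFd] with x hx hx'
      rw [(hx (Set.uIoc_subset_uIcc hx')).deriv]
    rw [hcongr] at ibp
    have e1 : ∫ s in (0:ℝ)..T, (W s * b s - lam * V s * a s)
        = (∫ s in (0:ℝ)..T, W s * b s) - lam * ∫ s in (0:ℝ)..T, V s * a s := by
      rw [← intervalIntegral.integral_const_mul, ← intervalIntegral.integral_sub]
      · simp only [mul_assoc]
      · exact (hWi 0 T).mul_continuousOn hbc.continuousOn
      · exact ((hVi 0 T).mul_continuousOn hacc.continuousOn).const_mul _
    have e2 : ∫ s in (0:ℝ)..T, b s * (W s + lam * F s)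
        = (∫ s in (0:ℝ)..T, W s * b s) + lam * ∫ s in (0:ℝ)..T, F s * b s := by
      rw [← intervalIntegral.integral_const_mul, ← intervalIntegral.integral_add]
      · congr 1; ext s; ring
      · exact (hWi 0 T).mul_continuousOn hbc.continuousOn
      · exact (Continuous.intervalIntegrable (by fun_prop) _ _)
    rw [e2, ibp]
    rw [e1] at h1
    linarith
  have hz : ∀ᵐ x ∂(volume : Measure ℝ), x ∈ Set.Ioo 0 T → W x + lam * F x = 0 := by
    apply isOpen_Ioo.ae_eq_zero_of_integral_contDiff_smul_eq_zero
    · have : LocallyIntegrable (fun x => W x + lam * F x) volume := by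
        refine LocallyIntegrable.add ?_ (by fun_prop : Continuous fun x => lam * F x).locallyIntegrable
        exact (locallyIntegrable_const B).mono hW.aestronglyMeasurable
          (Filter.Eventually.of_forall fun x => (hWB x).trans (le_abs_self B))
      exact this.locallyIntegrableOn _
    · intro g hg _ hs
      rw [← key g hg, intervalIntegral.integral_of_le hT.le]
      symm
      apply setIntegral_eq_integral_of_forall_compl_eq_zero
      intro x hx
      have : g x = 0 := by
        by_contra hne
        exact hx (Set.Ioo_subset_Ioc_self (hs (subset_tsupport g hne)))
      simp [this]
  rw [← restrict_Ioo_eq_restrict_Icc, ae_restrict_iff' measurableSet_Ioo]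
  filter_upwards [hz] with x hx hx'
  linarith [hx hx']

theorem time_sign (T lam : ℝ) (hT : 0 < T) (hl : 0 ≤ lam) (W V : ℝ → ℝ)
    (hV : Measurable V) (B : ℝ) (hVB : ∀ t, |V t| ≤ B)
    (h : ∀ᵐ t ∂(volume.restrict (Set.Icc 0 T)), W t = - lam * ∫ s in (0:ℝ)..t, V s) :
    ∫ t in Set.Icc 0 T, W t * V t ≤ 0 := by
  have hVi : ∀ a b, IntervalIntegrable V volume a b := fun a b =>
    (intervalIntegrable_const (c := B)).mono_fun' hV.aestronglyMeasurable
      (Filter.Eventually.of_forall hVB)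
  set F : ℝ → ℝ := fun t => ∫ s in (0:ℝ)..t, V s with hF
  have hFac : AbsolutelyContinuousOnInterval F 0 T :=
    (hVi 0 T).absolutelyContinuousOnInterval_intervalIntegral (by simp)
  have hFd : ∀ᵐ x ∂volume, x ∈ Set.uIcc 0 T → HasDerivAt F (V x) x := by
    exact (hVi 0 T).ae_hasDerivAt_integral.mono (fun x hx hx' => hx hx' 0 (by simp))
  have ibp := hFac.integral_mul_deriv_eq_deriv_mul hFac
  have hF0 : F 0 = 0 := by simp [hF]
  have c1 : ∫ x in (0:ℝ)..T, deriv F x * F x = ∫ x in (0:ℝ)..T, F x * V x := by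
    apply intervalIntegral.integral_congr_ae
    filter_upwards [hFd] with x hx hx'
    rw [(hx (Set.uIoc_subset_uIcc hx')).deriv, mul_comm]
  have c2 : ∫ x in (0:ℝ)..T, F x * deriv F x = ∫ x in (0:ℝ)..T, F x * V x := by
    rw [← c1]; simp only [mul_comm]
  rw [c1, c2, hF0] at ibp
  have : ∫ t in Set.Icc 0 T, W t * V t = ∫ t in Set.Icc 0 T, -lam * (F t * V t) := by
    apply integral_congr_ae
    filter_upwards [h] with t ht
    rw [ht]; ring
  rw [this, integral_const_mul, integral_Icc_eq_integral_Ioc,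
    ← intervalIntegral.integral_of_le hT.le]
  nlinarith [mul_self_nonneg (F T)]

section Parseval
open scoped Pointwise
attribute [local instance] instMeasureSpaceUnitAddCircle
attribute [local instance] instIsProbabilityMeasureUnitAddCircleVolume

/-- section of the covering map -/
noncomputable def torusSec (dd : ℕ) (x : UnitAddTorus (Fin dd)) : Fin dd → ℝ :=
  fun i => 2 * ((AddCircle.equivIoc (1:ℝ) (-1/2 : ℝ) (x i)).1)

theorem torusSec_measurable (dd : ℕ) : Measurable (torusSec dd) := by
  refine measurable_pi_lambda _ fun i => ?_
  refine Measurable.const_mul ?_ 2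
  exact measurable_subtype_coe.comp
    ((AddCircle.measurableEquivIoc (1:ℝ) (-1/2)).measurable.comp (measurable_pi_apply i))

theorem torus_integral {E : Type*} [NormedAddCommGroup E] [NormedSpace ℝ E]
    (dd : ℕ) (H : (Fin dd → ℝ) → E) :
    ∫ x : UnitAddTorus (Fin dd), H (torusSec dd x)
      = ((2:ℝ)^dd)⁻¹ • ∫ u in Box dd, H u := by
  rw [UnitAddTorus.integral_preimage (fun x => H (torusSec dd x)) (fun _ => (-1/2 : ℝ))]
  have hS : {x : Fin dd → ℝ | ∀ i, x i ∈ Set.Ioc (-1/2 : ℝ) (-1/2 + 1)}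
      = Set.univ.pi fun _ => Set.Ioc (-1/2 : ℝ) (1/2) := by
    ext x; simp [Set.mem_pi]; norm_num
  have hms : MeasurableSet (Set.univ.pi fun _ : Fin dd => Set.Ioc (-1/2 : ℝ) (1/2)) :=
    MeasurableSet.univ_pi fun _ => measurableSet_Ioc
  rw [hS]
  have h1 : ∫ x in Set.univ.pi fun _ : Fin dd => Set.Ioc (-1/2 : ℝ) (1/2),
      H (torusSec dd fun i => (x i : UnitAddCircle))
      = ∫ x in Set.univ.pi fun _ : Fin dd => Set.Ioc (-1/2 : ℝ) (1/2), H ((2:ℝ) • x) := by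
    apply setIntegral_congr_fun hms
    intro x hx
    simp only
    congr 1
    ext i
    have hxi : x i ∈ Set.Ioc (-1/2 : ℝ) (-1/2 + 1) := by
      have := hx i (Set.mem_univ i); norm_num at this ⊢; exact this
    simp only [torusSec, Pi.smul_apply, smul_eq_mul]
    rw [AddCircle.equivIoc_coe_of_mem hxi]
  rw [h1, Measure.setIntegral_comp_smul_of_pos volume H _ (by norm_num : (0:ℝ) < 2)]
  simp only [Module.finrank_fin_fun]
  congr 1
  apply setIntegral_congr_set
  have h2 : (2:ℝ) • (Set.univ.pi fun _ : Fin dd => Set.Ioc (-1/2 : ℝ) (1/2))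
      = Set.univ.pi fun _ : Fin dd => Set.Ioc (-1 : ℝ) 1 := by
    ext x
    rw [Set.mem_smul_set_iff_inv_smul_mem₀ (by norm_num)]
    simp only [Set.mem_pi, Set.mem_univ, true_imp_iff, Pi.smul_apply, smul_eq_mul, Set.mem_Ioc]
    refine forall_congr' fun i => ?_
    constructor <;> rintro ⟨h, h'⟩ <;> constructor <;> linarith
  rw [h2]
  have := Measure.univ_pi_Ioc_ae_eq_Icc (μ := fun _ : Fin dd => (volume : Measure ℝ))
    (f := fun _ => (-1:ℝ)) (g := fun _ => (1:ℝ))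
  rw [Box, volume_pi]
  rw [Set.pi_univ_Icc]
  exact this

/-- phase -/
noncomputable def phase {dd : ℕ} (k : Fin dd → ℤ) (u : Fin dd → ℝ) : ℝ :=
  ∑ i, (Real.pi * (k i : ℝ)) * u i

theorem mFourier_torusSec (dd : ℕ) (k : Fin dd → ℤ) (x : UnitAddTorus (Fin dd)) :
    UnitAddTorus.mFourier k x = Complex.exp (Complex.I * (phase k (torusSec dd x) : ℝ)) := by
  simp only [UnitAddTorus.mFourier, ContinuousMap.coe_mk, phase]
  push_cast
  rw [Finset.mul_sum, Complex.exp_sum]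
  refine Finset.prod_congr rfl fun i _ => ?_
  have hx : x i = (((AddCircle.equivIoc (1:ℝ) (-1/2 : ℝ) (x i)).1 : ℝ) : UnitAddCircle) :=
    (AddCircle.coe_equivIoc (p := (1:ℝ)) (a := -1/2)).symm
  conv_lhs => rw [hx]
  rw [fourier_coe_apply]
  congr 1
  simp only [torusSec]
  push_cast
  ring

noncomputable def cosC {dd : ℕ} (k : Fin dd → ℤ) (f : (Fin dd → ℝ) → ℝ) : ℝ :=
  ∫ u in Box dd, f u * Real.cos (phase k u)
noncomputable def sinC {dd : ℕ} (k : Fin dd → ℤ) (f : (Fin dd → ℝ) → ℝ) : ℝ :=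
  ∫ u in Box dd, f u * Real.sin (phase k u)

theorem phase_continuous {dd : ℕ} (k : Fin dd → ℤ) : Continuous (phase k) := by
  unfold phase; fun_prop

theorem box_finite (dd : ℕ) : IsFiniteMeasure ((volume : Measure (Fin dd → ℝ)).restrict (Box dd)) := by
  refine ⟨?_⟩
  rw [Measure.restrict_apply_univ]
  exact (isCompact_univ_pi fun _ => isCompact_Icc).measure_lt_top

theorem box_integrable {dd : ℕ} {f : (Fin dd → ℝ) → ℝ} (hf : Measurable f) {M : ℝ}
    (hM : ∀ u, |f u| ≤ M) : Integrable f (volume.restrict (Box dd)) := by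
  have := box_finite dd
  exact Integrable.of_bound hf.aestronglyMeasurable M (Filter.Eventually.of_forall hM)

theorem box_integrable_mul {dd : ℕ} {f e : (Fin dd → ℝ) → ℝ} (hf : Measurable f) (he : Measurable e)
    {M M' : ℝ} (hM : ∀ u, |f u| ≤ M) (hM' : ∀ u, |e u| ≤ M') :
    Integrable (fun u => f u * e u) (volume.restrict (Box dd)) := by
  refine box_integrable (hf.mul he) (M := M * M') fun u => ?_
  rw [abs_mul]
  exact mul_le_mul (hM u) (hM' u) (abs_nonneg _) ((abs_nonneg _).trans (hM u))

theorem mFourierCoeff_sec {dd : ℕ} (k : Fin dd → ℤ) (f : (Fin dd → ℝ) → ℝ) (hf : Measurable f)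
    (M : ℝ) (hM : ∀ u, |f u| ≤ M) :
    UnitAddTorus.mFourierCoeff (fun x => ((f (torusSec dd x) : ℝ) : ℂ)) k
      = (((2:ℝ)^dd)⁻¹ : ℝ) * ((cosC k f : ℂ) - Complex.I * (sinC k f : ℂ)) := by
  unfold UnitAddTorus.mFourierCoeff
  have : ∀ x : UnitAddTorus (Fin dd), UnitAddTorus.mFourier (-k) x • ((f (torusSec dd x) : ℝ) : ℂ)
      = (fun u => ((f u * Real.cos (phase k u) : ℝ) : ℂ)
          - Complex.I * ((f u * Real.sin (phase k u) : ℝ) : ℂ)) (torusSec dd x) := by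
    intro x
    rw [mFourier_torusSec]
    have hp : phase (-k) (torusSec dd x) = - phase k (torusSec dd x) := by
      simp [phase]
    rw [hp, mul_comm Complex.I, Complex.exp_mul_I]
    push_cast
    rw [Complex.cos_neg, Complex.sin_neg, smul_eq_mul]
    ring
  simp_rw [this]
  rw [torus_integral dd (fun u => ((f u * Real.cos (phase k u) : ℝ) : ℂ)
          - Complex.I * ((f u * Real.sin (phase k u) : ℝ) : ℂ))]
  rw [integral_sub, integral_const_mul, integral_complex_ofReal, integral_complex_ofReal]
  · rw [Complex.real_smul]; rfl
  · exact (box_integrable_mul hf (Real.continuous_cos.comp (phase_continuous k)).measurable hM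
      (fun u => Real.abs_cos_le_one _)).ofReal
  · exact (box_integrable_mul hf (Real.continuous_sin.comp (phase_continuous k)).measurable hM
      (fun u => Real.abs_sin_le_one _)).ofReal.const_mul _

theorem parseval {dd : ℕ} (f g : (Fin dd → ℝ) → ℝ) (hf : Measurable f) (hg : Measurable g)
    (M : ℝ) (hfM : ∀ u, |f u| ≤ M) (hgM : ∀ u, |g u| ≤ M) :
    HasSum (fun k : Fin dd → ℤ => cosC k f * cosC k g + sinC k f * sinC k g)
      ((2:ℝ)^dd * ∫ u in Box dd, f u * g u) := by
  have hmem : ∀ h : (Fin dd → ℝ) → ℝ, Measurable h → (∀ u, |h u| ≤ M) →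
      MemLp (fun x : UnitAddTorus (Fin dd) => ((h (torusSec dd x) : ℝ) : ℂ)) 2 volume := by
    intro h hh hM
    refine MemLp.of_bound (C := M) ?_ (Filter.Eventually.of_forall fun x => ?_)
    · exact (Complex.measurable_ofReal.comp (hh.comp (torusSec_measurable dd))).aestronglyMeasurable
    · rw [Complex.norm_real]; exact hM _
  have mf := hmem f hf hfM
  have mg := hmem g hg hgM
  have hs := UnitAddTorus.hasSum_prod_mFourierCoeff mf.toLp mg.toLp
  have cf : ∀ k, UnitAddTorus.mFourierCoeff mf.toLp k
      = UnitAddTorus.mFourierCoeff (fun x => ((f (torusSec dd x) : ℝ) : ℂ)) k := fun k => by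
    refine integral_congr_ae ?_
    filter_upwards [mf.coeFn_toLp] with x hx
    rw [hx]
  have cg : ∀ k, UnitAddTorus.mFourierCoeff mg.toLp k
      = UnitAddTorus.mFourierCoeff (fun x => ((g (torusSec dd x) : ℝ) : ℂ)) k := fun k => by
    refine integral_congr_ae ?_
    filter_upwards [mg.coeFn_toLp] with x hx
    rw [hx]
  have ci : ∫ t, (starRingEnd ℂ) (mf.toLp _ t) * (mg.toLp _ t)
      = ((((2:ℝ)^dd)⁻¹ * ∫ u in Box dd, f u * g u : ℝ) : ℂ) := by
    rw [← smul_eq_mul, ← torus_integral dd (fun u => f u * g u), ← integral_complex_ofReal]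
    refine integral_congr_ae ?_
    filter_upwards [mf.coeFn_toLp, mg.coeFn_toLp] with x hx hx'
    rw [hx, hx', Complex.conj_ofReal]
    push_cast; rfl
  rw [ci] at hs
  have hre := Complex.hasSum_re hs
  rw [Complex.ofReal_re] at hre
  have hre2 := hre.mul_left (((2:ℝ)^dd)^2)
  have h2 : ((2:ℝ)^dd) ≠ 0 := by positivity
  have hfun : (fun k : Fin dd → ℤ => cosC k f * cosC k g + sinC k f * sinC k g)
      = fun k => ((2:ℝ)^dd)^2 * ((starRingEnd ℂ) (UnitAddTorus.mFourierCoeff mf.toLp k)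
        * UnitAddTorus.mFourierCoeff mg.toLp k).re := by
    ext k
    rw [cf, cg, mFourierCoeff_sec k f hf M hfM, mFourierCoeff_sec k g hg M hgM]
    simp only [map_mul, map_sub, Complex.conj_ofReal, Complex.conj_I, Complex.mul_re, Complex.mul_im,
      Complex.sub_re, Complex.sub_im, Complex.ofReal_re, Complex.ofReal_im, Complex.I_re,
      Complex.I_im, Complex.neg_re, Complex.neg_im]
    field_simp
    ring
  have hval : (2:ℝ)^dd * ∫ u in Box dd, f u * g u
      = ((2:ℝ)^dd)^2 * (((2:ℝ)^dd)⁻¹ * ∫ u in Box dd, f u * g u) := by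
    field_simp
  rw [hfun, hval]
  exact hre2
end Parseval

theorem phase_contDiff {dd : ℕ} (k : Fin dd → ℤ) : ContDiff ℝ 2 (phase k) := by
  unfold phase; fun_prop

theorem phase_shift {dd : ℕ} (k m : Fin dd → ℤ) (u : Fin dd → ℝ) :
    phase k (fun i => u i + 2 * (m i : ℝ)) = phase k u + ((∑ i, k i * m i : ℤ) : ℝ) * (2 * Real.pi) := by
  unfold phase
  push_cast
  rw [Finset.sum_mul, ← Finset.sum_add_distrib]
  refine Finset.sum_congr rfl fun i _ => ?_
  ring

noncomputable def phaseL {dd : ℕ} (k : Fin dd → ℤ) : (Fin dd → ℝ) →L[ℝ] ℝ :=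
  ∑ i, (Real.pi * (k i : ℝ)) • ContinuousLinearMap.proj (R := ℝ) (φ := fun _ : Fin dd => ℝ) i

theorem phaseL_apply {dd : ℕ} (k : Fin dd → ℤ) (u : Fin dd → ℝ) : phaseL k u = phase k u := by
  simp [phaseL, phase]

theorem phase_hasFDerivAt {dd : ℕ} (k : Fin dd → ℤ) (u : Fin dd → ℝ) :
    HasFDerivAt (phase k) (phaseL k) u := by
  have : phase k = phaseL k := funext fun u => (phaseL_apply k u).symm
  rw [this]; exact (phaseL k).hasFDerivAt

theorem phaseL_single {dd : ℕ} (k : Fin dd → ℤ) (j : Fin dd) :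
    phaseL k (Pi.single j (1:ℝ)) = Real.pi * k j := by
  rw [phaseL_apply, phase]
  simp [Pi.single_apply]

/-- eigenvalue -/
noncomputable def eigA {dd : ℕ} (𝒜 : Matrix (Fin dd) (Fin dd) ℝ) (k : Fin dd → ℤ) : ℝ :=
  ∑ i, ∑ j, (Real.pi * k i) * 𝒜 i j * (Real.pi * k j)

theorem divAGrad_comp {dd : ℕ} (𝒜 : Matrix (Fin dd) (Fin dd) ℝ) (k : Fin dd → ℤ) (c : ℝ)
    (f f' : ℝ → ℝ) (h1 : ∀ x, HasDerivAt f (f' x) x) (h2 : ∀ x, HasDerivAt f' (- f x) x)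
    (u : Fin dd → ℝ) :
    divAGrad 𝒜 (fun u => c * f (phase k u)) u = - eigA 𝒜 k * (c * f (phase k u)) := by
  unfold divAGrad eigA
  have d1 : ∀ v j, fderiv ℝ (fun u => c * f (phase k u)) v (Pi.single j (1:ℝ))
      = (c * (Real.pi * k j)) * f' (phase k v) := by
    intro v j
    have hd : HasFDerivAt (fun u => c * f (phase k u)) _ v :=
      ((h1 _).comp_hasFDerivAt v (phase_hasFDerivAt k v)).const_mul c
    rw [hd.fderiv]
    simp only [_root_.smul_apply, smul_eq_mul, phaseL_single]
    ring
  have d2 : ∀ b v i, fderiv ℝ (fun u => b * f' (phase k u)) v (Pi.single i (1:ℝ))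
      = - (b * (Real.pi * k i) * f (phase k v)) := by
    intro b v j
    have hd : HasFDerivAt (fun u => b * f' (phase k u)) _ v :=
      ((h2 _).comp_hasFDerivAt v (phase_hasFDerivAt k v)).const_mul b
    rw [hd.fderiv]
    simp only [_root_.smul_apply, smul_eq_mul, phaseL_single]
    ring
  simp_rw [d1, d2]
  rw [neg_mul, Finset.sum_mul, ← Finset.sum_neg_distrib]
  refine Finset.sum_congr rfl fun i _ => ?_
  rw [Finset.sum_mul, ← Finset.sum_neg_distrib]
  refine Finset.sum_congr rfl fun j _ => ?_
  ring

theorem param_measurable {dd : ℕ} {r : ℝ → (Fin dd → ℝ) → ℝ}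
    (hr : Measurable (fun p : ℝ × (Fin dd → ℝ) => r p.1 p.2)) {e : (Fin dd → ℝ) → ℝ}
    (he : Measurable e) : Measurable fun s => ∫ u in Box dd, r s u * e u := by
  have := box_finite dd
  have h : StronglyMeasurable (Function.uncurry fun s u => r s u * e u) :=
    (hr.mul (he.comp measurable_snd)).stronglyMeasurable
  exact h.integral_prod_right.measurable

theorem param_bound {dd : ℕ} {r : (Fin dd → ℝ) → ℝ} {e : (Fin dd → ℝ) → ℝ} {M : ℝ}
    (hr : ∀ u, |r u| ≤ M) (he : ∀ u, |e u| ≤ 1) :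
    |∫ u in Box dd, r u * e u| ≤ M * (volume.restrict (Box dd)).real Set.univ := by
  have := box_finite dd
  rw [← Real.norm_eq_abs]
  refine norm_integral_le_of_norm_le_const (μ := volume.restrict (Box dd))
    (f := fun u => r u * e u) (Filter.Eventually.of_forall fun u => ?_)
  rw [Real.norm_eq_abs, abs_mul]
  calc |r u| * |e u| ≤ M * 1 :=
        mul_le_mul (hr u) (he u) (abs_nonneg _) ((abs_nonneg _).trans (hr u))
    _ = M := mul_one M

/-- the identity of a weak solution tested against one Fourier mode -/
theorem weak_mode {dd : ℕ} {T : ℝ} {𝒜 : Matrix (Fin dd) (Fin dd) ℝ} {φ : ℝ → ℝ}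
    (hφ : Continuous φ) {M' : ℝ}
    {ρ₀ : (Fin dd → ℝ) → ℝ} {ρ : ℝ → (Fin dd → ℝ) → ℝ} (h : IsWeakSolution T 𝒜 φ ρ₀ ρ)
    (hM' : ∀ t u, |φ (ρ t u)| ≤ M')
    (k : Fin dd → ℤ) (f f' : ℝ → ℝ) (hf : ContDiff ℝ 2 f) (hf1 : ∀ x, |f x| ≤ 1)
    (hper : ∀ (x : ℝ) (n : ℤ), f (x + n * (2 * Real.pi)) = f x)
    (h1 : ∀ x, HasDerivAt f (f' x) x) (h2 : ∀ x, HasDerivAt f' (- f x) x)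
    (a : ℝ → ℝ) (ha : ContDiff ℝ 2 a) (haT : a T = 0) :
    (∫ s in Set.Icc 0 T, ((∫ u in Box dd, ρ s u * f (phase k u)) * deriv a s
      - eigA 𝒜 k * (∫ u in Box dd, φ (ρ s u) * f (phase k u)) * a s))
      + ∫ u in Box dd, ρ₀ u * (a 0 * f (phase k u)) = 0 := by
  obtain ⟨hm, ⟨M, hM⟩, -, hG⟩ := h
  have hfm : Measurable fun u : Fin dd → ℝ => f (phase k u) :=
    (hf.continuous.comp (phase_contDiff k).continuous).measurable
  have hms : ∀ s, Measurable (ρ s) := fun s => hm.comp measurable_prodMk_left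
  have := hG (fun t u => a t * f (phase k u))
    ((ha.comp contDiff_fst).mul (hf.comp ((phase_contDiff k).comp contDiff_snd)))
    (fun t u m => by simp only [phase_shift, hper])
  simp only [haT, zero_mul, mul_zero, integral_zero] at this
  refine Eq.trans ?_ this
  refine congrArg (fun z => z + ∫ u in Box dd, ρ₀ u * (a 0 * f (phase k u))) ?_
  refine integral_congr_ae (Filter.Eventually.of_forall fun s => ?_)
  simp only
  have hd : ∀ u : Fin dd → ℝ, deriv (fun r => a r * f (phase k u)) s
      = deriv a s * f (phase k u) := fun u =>
    deriv_mul_const (ha.differentiable (by norm_num) s) _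
  simp only [hd, divAGrad_comp 𝒜 k _ f f' h1 h2]
  have e : ∀ u, ρ s u * (deriv a s * f (phase k u)) + φ (ρ s u) * (-eigA 𝒜 k * (a s * f (phase k u)))
      = (ρ s u * f (phase k u)) * deriv a s - (eigA 𝒜 k * a s) * (φ (ρ s u) * f (phase k u)) :=
    fun u => by ring
  simp only [e]
  rw [integral_sub, integral_mul_const, integral_const_mul]
  · ring
  · exact (box_integrable_mul (hms s) hfm (hM s) (fun u => hf1 _)).mul_const _
  · exact (box_integrable_mul (hφ.measurable.comp (hms s)) hfm (hM' s) (fun u => hf1 _)).const_mul _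

/-- the difference of two solutions, on one Fourier mode -/
theorem mode_diff {dd : ℕ} {T : ℝ} (hT : 0 < T) {𝒜 : Matrix (Fin dd) (Fin dd) ℝ} {φ : ℝ → ℝ}
    (hφ : Continuous φ) {M M' : ℝ}
    {ρ₀ : (Fin dd → ℝ) → ℝ} {ρ₁ ρ₂ : ℝ → (Fin dd → ℝ) → ℝ}
    (hs1 : IsWeakSolution T 𝒜 φ ρ₀ ρ₁) (hs2 : IsWeakSolution T 𝒜 φ ρ₀ ρ₂)
    (hM1 : ∀ t u, |ρ₁ t u| ≤ M) (hM2 : ∀ t u, |ρ₂ t u| ≤ M)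
    (hM1' : ∀ t u, |φ (ρ₁ t u)| ≤ M') (hM2' : ∀ t u, |φ (ρ₂ t u)| ≤ M')
    (k : Fin dd → ℤ) (f f' : ℝ → ℝ) (hf : ContDiff ℝ 2 f) (hf1 : ∀ x, |f x| ≤ 1)
    (hper : ∀ (x : ℝ) (n : ℤ), f (x + n * (2 * Real.pi)) = f x)
    (h1 : ∀ x, HasDerivAt f (f' x) x) (h2 : ∀ x, HasDerivAt f' (- f x) x) :
    ∀ᵐ t ∂(volume.restrict (Set.Icc 0 T)),
      (∫ u in Box dd, (ρ₁ t u - ρ₂ t u) * f (phase k u))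
        = - eigA 𝒜 k * ∫ s in (0:ℝ)..t, ∫ u in Box dd, (φ (ρ₁ s u) - φ (ρ₂ s u)) * f (phase k u) := by
  have hfm : Measurable fun u : Fin dd → ℝ => f (phase k u) :=
    (hf.continuous.comp (phase_contDiff k).continuous).measurable
  have hm1 := hs1.1
  have hm2 := hs2.1
  have hp1 : Measurable (fun p : ℝ × (Fin dd → ℝ) => φ (ρ₁ p.1 p.2)) := hφ.measurable.comp hm1
  have hp2 : Measurable (fun p : ℝ × (Fin dd → ℝ) => φ (ρ₂ p.1 p.2)) := hφ.measurable.comp hm2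
  have mp1 : ∀ s, Measurable (ρ₁ s) := fun s => hm1.comp measurable_prodMk_left
  have mp2 : ∀ s, Measurable (ρ₂ s) := fun s => hm2.comp measurable_prodMk_left
  set m := (volume.restrict (Box dd)).real Set.univ with hm
  have hm0 : 0 ≤ m := measureReal_nonneg
  refine time_rep T (eigA 𝒜 k) hT (fun t => ∫ u in Box dd, (ρ₁ t u - ρ₂ t u) * f (phase k u))
    (fun s => ∫ u in Box dd, (φ (ρ₁ s u) - φ (ρ₂ s u)) * f (phase k u))
    (param_measurable (hm1.sub hm2) hfm) (param_measurable (hp1.sub hp2) hfm)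
    (max ((M + M) * m) ((M' + M') * m))
    (fun t => (param_bound (M := M + M) (fun u => (abs_sub _ _).trans
      (add_le_add (hM1 t u) (hM2 t u))) (fun u => hf1 _)).trans (le_max_left _ _))
    (fun t => (param_bound (M := M' + M') (fun u => (abs_sub _ _).trans
      (add_le_add (hM1' t u) (hM2' t u))) (fun u => hf1 _)).trans (le_max_right _ _))
    fun a ha haT => ?_
  have w1 := weak_mode hφ hs1 hM1' k f f' hf hf1 hper h1 h2 a ha haT
  have w2 := weak_mode hφ hs2 hM2' k f f' hf hf1 hper h1 h2 a ha haT
  have hacont : Continuous a := ha.continuous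
  have hdcont : Continuous (deriv a) := ha.continuous_deriv (by norm_num)
  have hbint : ∀ (g c : ℝ → ℝ) (B : ℝ), Measurable g → (∀ t, |g t| ≤ B) → Continuous c →
      Integrable (fun s => g s * c s) (volume.restrict (Set.Icc 0 T)) := by
    intro g c B hg hB hc
    have hci : IntegrableOn c (Set.Icc 0 T) := hc.continuousOn.integrableOn_Icc
    exact hci.bdd_mul (c := B) hg.aestronglyMeasurable (Filter.Eventually.of_forall hB)
  have key : ∀ (ρ : ℝ → (Fin dd → ℝ) → ℝ),
      Measurable (fun p : ℝ × (Fin dd → ℝ) => ρ p.1 p.2) → (∀ t u, |ρ t u| ≤ M) →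
      (∀ t u, |φ (ρ t u)| ≤ M') →
      Integrable (fun s => (∫ u in Box dd, ρ s u * f (phase k u)) * deriv a s
      - eigA 𝒜 k * (∫ u in Box dd, φ (ρ s u) * f (phase k u)) * a s)
        (volume.restrict (Set.Icc 0 T)) := by
    intro ρ hρ hb hb'
    refine Integrable.sub ?_ ?_
    · exact hbint _ _ _ (param_measurable hρ hfm)
        (fun t => param_bound (hb t) (fun u => hf1 _)) hdcont
    · have hφρ : Measurable (fun p : ℝ × (Fin dd → ℝ) => φ (ρ p.1 p.2)) := hφ.measurable.comp hρ
      have := (hbint _ _ _ (param_measurable hφρ hfm)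
        (fun t => param_bound (hb' t) (fun u => hf1 _)) hacont).const_mul (eigA 𝒜 k)
      simpa only [mul_assoc] using this
  have hsub := integral_sub (key ρ₁ hm1 hM1 hM1') (key ρ₂ hm2 hM2 hM2')
  have : ∫ s in Set.Icc 0 T, ((∫ u in Box dd, (ρ₁ s u - ρ₂ s u) * f (phase k u)) * deriv a s
      - eigA 𝒜 k * (∫ u in Box dd, (φ (ρ₁ s u) - φ (ρ₂ s u)) * f (phase k u)) * a s)
      = ∫ s in Set.Icc 0 T, (((∫ u in Box dd, ρ₁ s u * f (phase k u)) * deriv a s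
      - eigA 𝒜 k * (∫ u in Box dd, φ (ρ₁ s u) * f (phase k u)) * a s)
      - ((∫ u in Box dd, ρ₂ s u * f (phase k u)) * deriv a s
      - eigA 𝒜 k * (∫ u in Box dd, φ (ρ₂ s u) * f (phase k u)) * a s)) := by
    refine integral_congr_ae (Filter.Eventually.of_forall fun s => ?_)
    simp only [sub_mul (ρ₁ s _), sub_mul (φ (ρ₁ s _))]
    rw [integral_sub, integral_sub]
    · ring
    · exact box_integrable_mul (hφ.measurable.comp (mp1 s)) hfm (hM1' s) (fun u => hf1 _)
    · exact box_integrable_mul (hφ.measurable.comp (mp2 s)) hfm (hM2' s) (fun u => hf1 _)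
    · exact box_integrable_mul (mp1 s) hfm (hM1 s) (fun u => hf1 _)
    · exact box_integrable_mul (mp2 s) hfm (hM2 s) (fun u => hf1 _)
  rw [this, hsub]
  linarith

/-- for a measure-in-time family, the time integral of `∫ f g` is non-positive if all mode
integrals are. -/
theorem integral_nonpos_of_modes {dd : ℕ} {T : ℝ} (f g : ℝ → (Fin dd → ℝ) → ℝ)
    (hf : Measurable (fun p : ℝ × (Fin dd → ℝ) => f p.1 p.2))
    (hg : Measurable (fun p : ℝ × (Fin dd → ℝ) => g p.1 p.2))
    (M : ℝ) (hfM : ∀ t u, |f t u| ≤ M) (hgM : ∀ t u, |g t u| ≤ M)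
    (hc : ∀ k, ∫ t in Set.Icc 0 T, cosC k (f t) * cosC k (g t) ≤ 0)
    (hs : ∀ k, ∫ t in Set.Icc 0 T, sinC k (f t) * sinC k (g t) ≤ 0) :
    ∫ t in Set.Icc 0 T, ∫ u in Box dd, f t u * g t u ≤ 0 := by
  have hfs : ∀ t, Measurable (f t) := fun t => hf.comp measurable_prodMk_left
  have hgs : ∀ t, Measurable (g t) := fun t => hg.comp measurable_prodMk_left
  set m := (volume.restrict (Box dd)).real Set.univ with hm
  have hcos : ∀ k : Fin dd → ℤ, Measurable fun u => Real.cos (phase k u) := fun k =>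
    (Real.continuous_cos.comp (phase_continuous k)).measurable
  have hsin : ∀ k : Fin dd → ℤ, Measurable fun u => Real.sin (phase k u) := fun k =>
    (Real.continuous_sin.comp (phase_continuous k)).measurable
  have mc : ∀ (h : ℝ → (Fin dd → ℝ) → ℝ), Measurable (fun p : ℝ × (Fin dd → ℝ) => h p.1 p.2) →
      ∀ k, Measurable fun t => cosC k (h t) := fun h hh k => param_measurable hh (hcos k)
  have ms : ∀ (h : ℝ → (Fin dd → ℝ) → ℝ), Measurable (fun p : ℝ × (Fin dd → ℝ) => h p.1 p.2) →
      ∀ k, Measurable fun t => sinC k (h t) := fun h hh k => param_measurable hh (hsin k)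
  have bc : ∀ (h : (Fin dd → ℝ) → ℝ), (∀ u, |h u| ≤ M) → ∀ k, |cosC k h| ≤ M * m :=
    fun h hh k => param_bound hh fun u => Real.abs_cos_le_one _
  have bs : ∀ (h : (Fin dd → ℝ) → ℝ), (∀ u, |h u| ≤ M) → ∀ k, |sinC k h| ≤ M * m :=
    fun h hh k => param_bound hh fun u => Real.abs_sin_le_one _
  have bint : ∀ p q : ℝ → ℝ, Measurable p → Measurable q → (∀ t, |p t| ≤ M * m) →
      (∀ t, |q t| ≤ M * m) → Integrable (fun t => p t * q t) (volume.restrict (Set.Icc 0 T)) := by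
    intro p q hp hq hpb hqb
    refine Integrable.of_bound (hp.mul hq).aestronglyMeasurable ((M * m) * (M * m))
      (Filter.Eventually.of_forall fun t => ?_)
    rw [Real.norm_eq_abs]
    rw [abs_mul]
    exact mul_le_mul (hpb t) (hqb t) (abs_nonneg _) ((abs_nonneg _).trans (hpb t))
  -- energy bound
  have en : ∀ (h : (Fin dd → ℝ) → ℝ), Measurable h → (∀ u, |h u| ≤ M) →
      ∀ K : Finset (Fin dd → ℤ), ∑ k ∈ K, (cosC k h ^ 2 + sinC k h ^ 2) ≤ 2 ^ dd * (M * M * m) := by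
    intro h hh hb K
    have hp := parseval h h hh hh M hb hb
    have h1 := sum_le_hasSum K (fun k _ => by nlinarith [sq_nonneg (cosC k h), sq_nonneg (sinC k h)]) hp
    have h2 : ∫ u in Box dd, h u * h u ≤ M * M * m := by
      refine (le_abs_self _).trans ?_
      have := box_finite dd
      rw [← Real.norm_eq_abs]
      refine norm_integral_le_of_norm_le_const (μ := volume.restrict (Box dd))
        (f := fun u => h u * h u) (Filter.Eventually.of_forall fun u => ?_)
      rw [Real.norm_eq_abs, abs_mul]
      exact mul_le_mul (hb u) (hb u) (abs_nonneg _) ((abs_nonneg _).trans (hb u))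
    calc ∑ k ∈ K, (cosC k h ^ 2 + sinC k h ^ 2)
        = ∑ k ∈ K, (cosC k h * cosC k h + sinC k h * sinC k h) :=
          Finset.sum_congr rfl fun k _ => by ring
      _ ≤ _ := h1
      _ ≤ _ := mul_le_mul_of_nonneg_left h2 (by positivity)
  have lim : Filter.Tendsto (fun K : Finset (Fin dd → ℤ) => ∫ t in Set.Icc 0 T,
      ∑ k ∈ K, (cosC k (f t) * cosC k (g t) + sinC k (f t) * sinC k (g t))) Filter.atTop
      (nhds (∫ t in Set.Icc 0 T, (2:ℝ)^dd * ∫ u in Box dd, f t u * g t u)) := by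
    refine tendsto_integral_filter_of_dominated_convergence (fun _ => 2 ^ dd * (M * M * m)) ?_ ?_ ?_ ?_
    · refine Filter.Eventually.of_forall fun K => ?_
      refine (Finset.measurable_fun_sum K fun k _ => ?_).aestronglyMeasurable
      exact ((mc f hf k).mul (mc g hg k)).add ((ms f hf k).mul (ms g hg k))
    · refine Filter.Eventually.of_forall fun K => Filter.Eventually.of_forall fun t => ?_
      have e1 := en (f t) (hfs t) (hfM t) K
      have e2 := en (g t) (hgs t) (hgM t) K
      rw [Real.norm_eq_abs]
      calc |∑ k ∈ K, (cosC k (f t) * cosC k (g t) + sinC k (f t) * sinC k (g t))|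
          ≤ ∑ k ∈ K, |cosC k (f t) * cosC k (g t) + sinC k (f t) * sinC k (g t)| :=
            Finset.abs_sum_le_sum_abs _ _
        _ ≤ ∑ k ∈ K, ((cosC k (f t) ^ 2 + sinC k (f t) ^ 2) / 2
              + (cosC k (g t) ^ 2 + sinC k (g t) ^ 2) / 2) := by
            refine Finset.sum_le_sum fun k _ => ?_
            rw [abs_le]
            constructor <;> nlinarith [sq_nonneg (cosC k (f t) - cosC k (g t)),
              sq_nonneg (cosC k (f t) + cosC k (g t)), sq_nonneg (sinC k (f t) - sinC k (g t)),
              sq_nonneg (sinC k (f t) + sinC k (g t))]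
        _ = (∑ k ∈ K, (cosC k (f t) ^ 2 + sinC k (f t) ^ 2)) / 2
              + (∑ k ∈ K, (cosC k (g t) ^ 2 + sinC k (g t) ^ 2)) / 2 := by
            rw [Finset.sum_add_distrib, Finset.sum_div, Finset.sum_div]
        _ ≤ _ := by linarith
    · exact integrable_const _
    · exact Filter.Eventually.of_forall fun t =>
        parseval (f t) (g t) (hfs t) (hgs t) M (hfM t) (hgM t)
  have hle : ∫ t in Set.Icc 0 T, (2:ℝ)^dd * ∫ u in Box dd, f t u * g t u ≤ 0 := by
    refine le_of_tendsto lim (Filter.Eventually.of_forall fun K => ?_)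
    have ic : ∀ k, Integrable (fun t => cosC k (f t) * cosC k (g t))
        (volume.restrict (Set.Icc 0 T)) := fun k =>
      bint _ _ (mc f hf k) (mc g hg k) (fun t => bc _ (hfM t) k) (fun t => bc _ (hgM t) k)
    have is : ∀ k, Integrable (fun t => sinC k (f t) * sinC k (g t))
        (volume.restrict (Set.Icc 0 T)) := fun k =>
      bint _ _ (ms f hf k) (ms g hg k) (fun t => bs _ (hfM t) k) (fun t => bs _ (hgM t) k)
    rw [integral_finsetSum K fun k _ => (ic k).fun_add (is k)]
    refine Finset.sum_nonpos fun k _ => ?_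
    rw [integral_add (ic k) (is k)]
    linarith [hc k, hs k]
  rw [integral_const_mul] at hle
  by_contra hcon
  push Not at hcon
  have : (0:ℝ) < 2 ^ dd := by positivity
  nlinarith [mul_pos this hcon]

/-- a non-negative bounded function whose double integral is non-positive vanishes a.e. -/
theorem ae_zero_of_double {dd : ℕ} {T : ℝ} (F : ℝ → (Fin dd → ℝ) → ℝ)
    (hF : Measurable (fun p : ℝ × (Fin dd → ℝ) => F p.1 p.2))
    (M : ℝ) (hFM : ∀ t u, |F t u| ≤ M) (h0 : ∀ t u, 0 ≤ F t u)
    (hI : ∫ t in Set.Icc 0 T, ∫ u in Box dd, F t u ≤ 0) :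
    ∀ᵐ p ∂((volume.restrict (Set.Icc (0 : ℝ) T)).prod
        (volume.restrict (Box dd))), F p.1 p.2 = 0 := by
  have := box_finite dd
  have hint : Integrable (fun p : ℝ × (Fin dd → ℝ) => F p.1 p.2)
      ((volume.restrict (Set.Icc (0 : ℝ) T)).prod (volume.restrict (Box dd))) :=
    Integrable.of_bound hF.aestronglyMeasurable M (Filter.Eventually.of_forall fun p => hFM _ _)
  have hp := integral_prod _ hint
  have hz : ∫ p, F p.1 p.2 ∂((volume.restrict (Set.Icc (0 : ℝ) T)).prod
        (volume.restrict (Box dd))) = 0 := by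
    refine le_antisymm (by rw [hp]; exact hI) (integral_nonneg fun p => h0 _ _)
  exact (integral_eq_zero_iff_of_nonneg (fun p => h0 _ _) hint).1 hz

/-- uniqueness of bounded weak solutions of the degenerate
parabolic equation `∂_t ρ = ∇·(𝒜∇φ(ρ))` on the torus `[−1,1]^d` with periodic
boundary conditions, for `φ` Lipschitz, non-decreasing, `φ(0) = 0`, and `𝒜`
constant, symmetric and uniformly elliptic: two bounded weak solutions with the
same bounded initial profile `ρ₀` agree almost everywhere on `[0,T]×U^d`. -/
theorem uniqueness_weak_solutions_hydrodynamic_equation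
    (dd : ℕ) (hdd : 0 < dd) (T ε₀ : ℝ) (hT : 0 < T) (hε : 0 < ε₀)
    (𝒜 : Matrix (Fin dd) (Fin dd) ℝ) (hsym : 𝒜.IsSymm)
    (hell : ∀ ξ : Fin dd → ℝ,
      ε₀ * ∑ i, ξ i ^ 2 ≤ ∑ i, ∑ j, ξ i * 𝒜 i j * ξ j ∧
      ∑ i, ∑ j, ξ i * 𝒜 i j * ξ j ≤ ε₀⁻¹ * ∑ i, ξ i ^ 2)
    (φ : ℝ → ℝ) (Lc : NNReal) (hLip : LipschitzWith Lc φ)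
    (hmono : Monotone φ) (hφ0 : φ 0 = 0) (hφnn : ∀ r, 0 ≤ r → 0 ≤ φ r)
    (ρ₀ : (Fin dd → ℝ) → ℝ) (hρ₀ : ∃ M : ℝ, ∀ u, |ρ₀ u| ≤ M)
    (ρ₁ ρ₂ : ℝ → (Fin dd → ℝ) → ℝ)
    (h1 : IsWeakSolution T 𝒜 φ ρ₀ ρ₁) (h2 : IsWeakSolution T 𝒜 φ ρ₀ ρ₂) :
    ∀ᵐ p ∂((volume.restrict (Set.Icc (0 : ℝ) T)).prod
        (volume.restrict (Box dd))), ρ₁ p.1 p.2 = ρ₂ p.1 p.2 := by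
  obtain ⟨M1, hM1⟩ := h1.2.1
  obtain ⟨M2, hM2⟩ := h2.2.1
  have hφc : Continuous φ := hLip.continuous
  have hφb : ∀ x, |φ x| ≤ Lc * |x| := fun x => by
    have := hLip.dist_le_mul x 0
    simpa [Real.dist_eq, hφ0] using this
  set M := max M1 M2 with hMdef
  have b1 : ∀ t u, |ρ₁ t u| ≤ M := fun t u => (hM1 t u).trans (le_max_left _ _)
  have b2 : ∀ t u, |ρ₂ t u| ≤ M := fun t u => (hM2 t u).trans (le_max_right _ _)
  set M' := (Lc : ℝ) * M with hM'def
  have b1' : ∀ t u, |φ (ρ₁ t u)| ≤ M' := fun t u =>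
    (hφb _).trans (mul_le_mul_of_nonneg_left (b1 t u) Lc.2)
  have b2' : ∀ t u, |φ (ρ₂ t u)| ≤ M' := fun t u =>
    (hφb _).trans (mul_le_mul_of_nonneg_left (b2 t u) Lc.2)
  set N := max (M + M) (M' + M') with hN
  set w : ℝ → (Fin dd → ℝ) → ℝ := fun t u => ρ₁ t u - ρ₂ t u with hw
  set v : ℝ → (Fin dd → ℝ) → ℝ := fun t u => φ (ρ₁ t u) - φ (ρ₂ t u) with hv
  have wm : Measurable (fun p : ℝ × (Fin dd → ℝ) => w p.1 p.2) := h1.1.sub h2.1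
  have vm : Measurable (fun p : ℝ × (Fin dd → ℝ) => v p.1 p.2) :=
    (hφc.measurable.comp h1.1).sub (hφc.measurable.comp h2.1)
  have wN : ∀ t u, |w t u| ≤ N := fun t u =>
    ((abs_sub _ _).trans (add_le_add (b1 t u) (b2 t u))).trans (le_max_left _ _)
  have vN : ∀ t u, |v t u| ≤ N := fun t u =>
    ((abs_sub _ _).trans (add_le_add (b1' t u) (b2' t u))).trans (le_max_right _ _)
  have hlam : ∀ k : Fin dd → ℤ, 0 ≤ eigA 𝒜 k := fun k =>
    le_trans (mul_nonneg hε.le (Finset.sum_nonneg fun i _ => sq_nonneg _))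
      (hell fun i => Real.pi * k i).1
  have repc : ∀ k : Fin dd → ℤ, ∀ᵐ t ∂(volume.restrict (Set.Icc 0 T)),
      cosC k (w t) = - eigA 𝒜 k * ∫ s in (0:ℝ)..t, cosC k (v s) := fun k =>
    mode_diff hT hφc h1 h2 b1 b2 b1' b2' k Real.cos (fun x => - Real.sin x) Real.contDiff_cos
      Real.abs_cos_le_one Real.cos_add_int_mul_two_pi Real.hasDerivAt_cos
      (fun x => (Real.hasDerivAt_sin x).neg)
  have reps : ∀ k : Fin dd → ℤ, ∀ᵐ t ∂(volume.restrict (Set.Icc 0 T)),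
      sinC k (w t) = - eigA 𝒜 k * ∫ s in (0:ℝ)..t, sinC k (v s) := fun k =>
    mode_diff hT hφc h1 h2 b1 b2 b1' b2' k Real.sin Real.cos Real.contDiff_sin
      Real.abs_sin_le_one Real.sin_add_int_mul_two_pi Real.hasDerivAt_sin Real.hasDerivAt_cos
  have hcos : ∀ k : Fin dd → ℤ, Measurable fun u => Real.cos (phase k u) := fun k =>
    (Real.continuous_cos.comp (phase_continuous k)).measurable
  have hsin : ∀ k : Fin dd → ℤ, Measurable fun u => Real.sin (phase k u) := fun k =>
    (Real.continuous_sin.comp (phase_continuous k)).measurable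
  have hwv : ∫ t in Set.Icc 0 T, ∫ u in Box dd, w t u * v t u ≤ 0 :=
    integral_nonpos_of_modes w v wm vm N wN vN
      (fun k => time_sign T _ hT (hlam k) _ _ (param_measurable vm (hcos k)) _
        (fun t => param_bound (vN t) fun u => Real.abs_cos_le_one _) (repc k))
      (fun k => time_sign T _ hT (hlam k) _ _ (param_measurable vm (hsin k)) _
        (fun t => param_bound (vN t) fun u => Real.abs_sin_le_one _) (reps k))
  have hNN : ∀ (p q : ℝ → (Fin dd → ℝ) → ℝ), (∀ t u, |p t u| ≤ N) → (∀ t u, |q t u| ≤ N) →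
      ∀ t u, |p t u * q t u| ≤ N * N := fun p q hp hq t u => by
    rw [abs_mul]
    exact mul_le_mul (hp t u) (hq t u) (abs_nonneg _) ((abs_nonneg _).trans (hp t u))
  have hwv0 := ae_zero_of_double (T := T) (fun t u => w t u * v t u) (wm.mul vm) (N * N)
    (hNN w v wN vN) (fun t u => by
      rcases le_total (ρ₁ t u) (ρ₂ t u) with h | h
      · exact mul_nonneg_of_nonpos_of_nonpos (sub_nonpos.2 h) (sub_nonpos.2 (hmono h))
      · exact mul_nonneg (sub_nonneg.2 h) (sub_nonneg.2 (hmono h))) hwv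
  have hv0 : ∀ᵐ p ∂((volume.restrict (Set.Icc (0 : ℝ) T)).prod
        (volume.restrict (Box dd))), v p.1 p.2 = 0 := by
    filter_upwards [hwv0] with p hp
    rcases mul_eq_zero.1 hp with h | h
    · have : ρ₁ p.1 p.2 = ρ₂ p.1 p.2 := sub_eq_zero.1 h
      simp only [hv, this, sub_self]
    · exact h
  have := box_finite dd
  have hv1 : ∀ᵐ t ∂(volume.restrict (Set.Icc (0 : ℝ) T)),
      ∀ᵐ u ∂(volume.restrict (Box dd)), v t u = 0 := Measure.ae_ae_of_ae_prod hv0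
  have vanish : ∀ e : (Fin dd → ℝ) → ℝ, ∀ t ∈ Set.Icc (0:ℝ) T,
      ∫ s in (0:ℝ)..t, ∫ u in Box dd, v s u * e u = 0 := by
    intro e t ht
    rw [intervalIntegral.integral_of_le ht.1]
    have hsub : Set.Ioc 0 t ⊆ Set.Icc 0 T := fun x hx => ⟨hx.1.le, hx.2.trans ht.2⟩
    refine integral_eq_zero_of_ae ?_
    filter_upwards [ae_restrict_of_ae_restrict_of_subset hsub hv1] with s hs
    refine integral_eq_zero_of_ae ?_
    filter_upwards [hs] with u hu
    simp [hu]
  have hww : ∫ t in Set.Icc 0 T, ∫ u in Box dd, w t u * w t u ≤ 0 := by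
    refine integral_nonpos_of_modes w w wm wm N wN wN (fun k => le_of_eq ?_) (fun k => le_of_eq ?_)
    · refine integral_eq_zero_of_ae ?_
      filter_upwards [repc k, ae_restrict_mem measurableSet_Icc] with t ht ht'
      have h0 : ∫ s in (0:ℝ)..t, cosC k (v s) = 0 := vanish _ t ht'
      simp [ht, h0]
    · refine integral_eq_zero_of_ae ?_
      filter_upwards [reps k, ae_restrict_mem measurableSet_Icc] with t ht ht'
      have h0 : ∫ s in (0:ℝ)..t, sinC k (v s) = 0 := vanish _ t ht'
      simp [ht, h0]
  have hw0 := ae_zero_of_double (T := T) (fun t u => w t u * w t u) (wm.mul wm) (N * N)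
    (hNN w w wN wN) (fun t u => mul_self_nonneg _) hww
  filter_upwards [hw0] with p hp
  exact sub_eq_zero.1 (mul_self_eq_zero.1 hp)
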